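/- There exists a universal constant A > 0 such that for all natural numbers m ≥ ℓ ≥ 8 and all k with 2 ≤ k ≤ ℓm/2, one has (as real numbers) p_k(ℓ,m) − p_{k−1}(ℓ,m) > A · 2^{√s} / s^{9/4}, where s = min{2k, ℓ²}. -/

import Mathlib

/-- `rectPartitions k l m` is the number of integer partitions of `k` fitting in an
`l × m` rectangle: at most `l` parts, each part at most `m`. -/
noncomputable def rectPartitions (k l m : ℕ) : ℕ :=
  Nat.card {π : Nat.Partition k // Multiset.card π.parts ≤ l ∧ ∀ i ∈ π.parts, i ≤ m}

/-!
The number `p_k(a, b)` is the `k`-th coefficient of a Gaussian binomial coefficient, which is also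
the dimension of the space of polynomials in `X 0, …, X b` of degree `a` and index `k`. On these
polynomials `sl₂` acts by derivations, and for `2k ≤ ab` the difference `p_k(a, b) - p_{k-1}(a, b)`
is the dimension of the space of highest weight vectors. Such vectors can be multiplied, so if
`p_{k₂}(a₂, b) > p_{k₂-1}(a₂, b)`, then the difference at `(a₁ + a₂, b, k₁ + k₂)` is at least the
one at `(a₁, b, k₁)`. Starting from the rectangles with sides between `8` and `15`, this shows that
the differences are positive for `k ≠ 1`, and then that the difference at `(a, b, k)` is at least
the central one of a square of side `2h`, where `2h` differs from `√s` by a bounded amount.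

The central difference of a square of even side `r` is `4/π` times the integral over `[0, π/2]` of
`sin² θ` times the Gaussian binomial coefficient at `q = exp (2iθ)`, normalised to be real. Near
`0` the latter is of order `binom(2r, r) ≥ 4 ^ r / r`. It is positive while `2rθ < π`. For larger
`θ`, Parseval's identity for the product of the `1 + q ^ i z` over the circle `|z| = 1` bounds it by
`(4e) ^ (r / 2) ≤ (7/2) ^ r`. Hence the central difference exceeds `x ^ r` for every `x < 4` and
large `r`, and `x = 2` suffices.
-/

section Elementary

open Polynomial

theorem filter_ne_zero_add_replicate (s : Multiset ℕ) :
    s.filter (· ≠ 0) + .replicate (Multiset.card s - Multiset.card (s.filter (· ≠ 0))) 0 = s := by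
  have hsplit := Multiset.filter_add_not (· ≠ 0) s
  have hcard := congrArg Multiset.card hsplit
  rw [Multiset.card_add] at hcard
  have hzeros : s.filter (¬ · ≠ 0) =
      .replicate (Multiset.card s - Multiset.card (s.filter (· ≠ 0))) 0 :=
    Multiset.eq_replicate.2 ⟨by omega, fun i hi => not_not.1 (Multiset.mem_filter.1 hi).2⟩
  rwa [← hzeros]

theorem exists_add_eq_of_ne_one {k n₁ n₂ : ℕ} (h₁ : 3 ≤ n₁) (h₂ : 2 ≤ n₂) (hk : k ≤ n₁ + n₂)
    (hk1 : k ≠ 1) : ∃ k₁ k₂, k₁ + k₂ = k ∧ k₁ ≤ n₁ ∧ k₂ ≤ n₂ ∧ k₁ ≠ 1 ∧ k₂ ≠ 1 := by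
  rcases le_or_gt k n₁ with h | h
  · exact ⟨k, 0, rfl, h, zero_le, hk1, zero_ne_one⟩
  rcases eq_or_ne k (n₁ + 1) with rfl | hne
  · exact ⟨n₁ - 1, 2, by omega⟩
  · exact ⟨n₁, k - n₁, by omega⟩

theorem eval_div_pow_mod {p : ℕ[X]} {B : ℕ} (hp : ∀ j, p.coeff j < B) (k : ℕ) :
    p.eval B / B ^ k % B = p.coeff k := by
  have eval_eq (p : ℕ[X]) : p.eval B = B * p.divX.eval B + p.coeff 0 := by
    conv_lhs => rw [← divX_mul_X_add p]
    simp [mul_comm]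
  induction k generalizing p with
  | zero => rw [eval_eq, pow_zero, Nat.div_one, Nat.mul_add_mod, Nat.mod_eq_of_lt (hp 0)]
  | succ k ih =>
    rw [eval_eq, pow_succ', ← Nat.div_div_eq_div_mul, Nat.mul_add_div (hp 0).pos,
      Nat.div_eq_of_lt (hp 0), add_zero, ih fun j => coeff_divX (p := p) ▸ hp _, coeff_divX]

end Elementary

section SlTwo

open Module

variable {K M : Type*} {w k : ℤ}

theorem pow_apply_mem_sub [Semiring K] [AddCommMonoid M] [Module K M]
    {V : ℤ → Submodule K M} {D : End K M} (hD : ∀ j, ∀ v ∈ V j, D v ∈ V (j - 1))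
    {v : M} (hv : v ∈ V k) (s : ℕ) :
    (D ^ s) v ∈ V (k - s) := by
  induction s with
  | zero => simpa using hv
  | succ s ih =>
    rw [pow_succ', End.mul_apply, Nat.cast_succ, ← sub_sub]
    exact hD _ _ ih

theorem pow_succ_apply_of_commutator [CommRing K] [AddCommGroup M] [Module K M]
    {V : ℤ → Submodule K M} {D U : End K M} (hD : ∀ j, ∀ v ∈ V j, D v ∈ V (j - 1))
    (hDU : ∀ j, ∀ v ∈ V j, D (U v) = U (D v) + ((w - 2 * j : ℤ) : K) • v)
    {v : M} (hv : v ∈ V k) (s : ℕ) :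
    (D ^ (s + 1)) (U v) =
      U ((D ^ (s + 1)) v) + (((s + 1) * (w - 2 * k + s) : ℤ) : K) • (D ^ s) v := by
  induction s with
  | zero => simpa using hDU k v hv
  | succ s ih =>
    rw [pow_succ' D (s + 1), End.mul_apply, ih, map_add, map_smul,
      hDU _ _ (pow_apply_mem_sub hD hv _), ← End.mul_apply D, ← End.mul_apply D, ← pow_succ',
      ← pow_succ', add_assoc, ← add_smul, ← Int.cast_add]
    congr 3
    push_cast
    ring

theorem le_map_of_commutator [Field K] [CharZero K] [AddCommGroup M] [Module K M]
    {V : ℤ → Submodule K M} {D U : End K M} (hV : ∀ j < 0, V j = ⊥)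
    (hD : ∀ j, ∀ v ∈ V j, D v ∈ V (j - 1)) (hU : ∀ j, ∀ v ∈ V j, U v ∈ V (j + 1))
    (hDU : ∀ j, ∀ v ∈ V j, D (U v) = U (D v) + ((w - 2 * j : ℤ) : K) • v) (hk : 2 * k < w) :
    V k ≤ (V (k + 1)).map D := by
  have of_pow_eq_zero (s : ℕ) : ∀ v ∈ V k, (D ^ s) v = 0 → v ∈ (V (k + 1)).map D := by
    induction s with
    | zero =>
      rintro v - rfl
      exact zero_mem _
    | succ s ih =>
      intro v hv hs
      have hc : (((s + 1) * (w - 2 * k + s) : ℤ) : K) ≠ 0 :=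
        Int.cast_ne_zero.2 (mul_pos (by omega) (by omega)).ne'
      have hDUv : D (U v) ∈ V k := by simpa using hD _ _ (hU k v hv)
      have hker := pow_succ_apply_of_commutator hD hDU hv s
      rw [hs, map_zero, zero_add, pow_succ, End.mul_apply] at hker
      -- `D (U v)` minus a nonzero multiple of `v` is killed by one power of `D` less than `v`.
      have hdiff := ih _ (sub_mem hDUv ((V k).smul_mem _ hv))
        (by rw [map_sub, map_smul, hker, sub_self])
      refine (Submodule.smul_mem_iff _ hc).1 ?_
      simpa using sub_mem (Submodule.mem_map_of_mem (f := D) (hU k v hv)) hdiff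
  intro v hv
  refine of_pow_eq_zero (k.toNat + 1) v hv ?_
  rw [← Submodule.mem_bot K, ← hV (k - (k.toNat + 1 : ℕ)) (by omega)]
  exact pow_apply_mem_sub hD hv _

end SlTwo

section WeightedDerivations

open MvPolynomial

variable {σ R M : Type*} [CommSemiring R] [AddCommMonoid M] {weight : σ → M} {n : M}
  {p : MvPolynomial σ R}

theorem isWeightedHomogeneous_mkDerivation {f : σ → MvPolynomial σ R} {δ : M}
    (hf : ∀ i, IsWeightedHomogeneous weight (f i) (weight i + δ))
    (hp : IsWeightedHomogeneous weight p n) :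
    IsWeightedHomogeneous weight (mkDerivation R f p) (n + δ) := by
  induction hp using IsWeightedHomogeneous.induction_on with
  | zero => simpa using isWeightedHomogeneous_zero _ _ _
  | add p q _ _ hp hq => simpa using hp.add hq
  | monomial d r hd =>
    rw [mkDerivation_monomial, smul_eq_C_mul]
    refine .C_mul (.sum _ _ _ fun i hi => ?_) _
    rw [← hd, ← Finsupp.weight_sub_single_add (w := weight) (Finsupp.mem_support_iff.1 hi),
      add_assoc]
    exact (isWeightedHomogeneous_monomial weight _ _ rfl).mul (hf i)

theorem mkDerivation_smul_X_apply (φ : M →+ R) (hp : IsWeightedHomogeneous weight p n) :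
    mkDerivation R (fun i => φ (weight i) • X i) p = φ n • p := by
  induction hp using IsWeightedHomogeneous.induction_on with
  | zero => simp
  | add p q _ _ hp hq => rw [map_add, hp, hq, smul_add]
  | monomial d r hd =>
    have hterm (i) (hi : i ∈ d.support) :
        monomial (d - Finsupp.single i 1) (d i : R) • (φ (weight i) • X i : MvPolynomial σ R) =
          monomial d (φ (d i • weight i)) := by
      have hcancel : d - Finsupp.single i 1 + Finsupp.single i 1 = d :=
        tsub_add_cancel_of_le (Finsupp.single_le_iff.2
          (Nat.one_le_iff_ne_zero.2 (Finsupp.mem_support_iff.1 hi)))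
      rw [smul_eq_mul, X, smul_monomial, monomial_mul, hcancel, map_nsmul, nsmul_eq_mul,
        smul_eq_mul, mul_one]
    rw [mkDerivation_monomial, Finsupp.sum, Finset.sum_congr rfl hterm, ← map_sum, ← map_sum,
      ← hd, Finsupp.weight_apply, Finsupp.sum, smul_monomial, smul_monomial, smul_eq_mul,
      smul_eq_mul, mul_comm]

end WeightedDerivations

section UnitCircle

open Polynomial

theorem sq_norm_coeff_le_of_forall_norm_eq_one {p : ℂ[X]} {K : ℝ}
    (hp : ∀ z : ℂ, ‖z‖ = 1 → ‖p.eval z‖ ^ 2 ≤ K) (n : ℕ) : ‖p.coeff n‖ ^ 2 ≤ K := by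
  have hK : 0 ≤ K := (sq_nonneg _).trans (hp 1 norm_one)
  rcases eq_or_ne (p.coeff n) 0 with hn | hn
  · simpa [hn] using hK
  calc ‖p.coeff n‖ ^ 2 ≤ ∑ i ∈ p.support, ‖p.coeff i‖ ^ 2 :=
      Finset.single_le_sum (f := fun i => ‖p.coeff i‖ ^ 2) (fun _ _ => sq_nonneg _)
        (mem_support_iff.2 hn)
    _ = Real.circleAverage (fun z => ‖p.eval z‖ ^ 2) 0 1 := p.sum_sq_norm_coeff_eq_circleAverage
    _ ≤ K := Real.circleAverage_mono_on_of_le_circle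
      (ContinuousOn.circleIntegrable' (by fun_prop)) fun z hz => hp z (by simpa using hz)

theorem sq_norm_one_add_le_two_mul_exp_re {w : ℂ} (hw : ‖w‖ = 1) :
    ‖1 + w‖ ^ 2 ≤ 2 * Real.exp w.re := by
  calc ‖1 + w‖ ^ 2 = 2 * (w.re + 1) := by
        have hsq := Complex.sq_norm w
        rw [hw, Complex.normSq_apply] at hsq
        rw [Complex.sq_norm, Complex.normSq_apply, Complex.add_re, Complex.add_im, Complex.one_re,
          Complex.one_im]
        linarith
    _ ≤ 2 * Real.exp w.re := by gcongr; exact Real.add_one_le_exp _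

theorem norm_geom_sum_le_two_div {q : ℂ} (hq : ‖q‖ = 1) (hq1 : q ≠ 1) (n : ℕ) :
    ‖∑ i ∈ Finset.range n, q ^ i‖ ≤ 2 / ‖1 - q‖ := by
  rw [le_div_iff₀ (norm_pos_iff.2 (sub_ne_zero.2 hq1.symm)), ← norm_mul, geom_sum_mul_neg]
  calc ‖1 - q ^ n‖ ≤ ‖(1 : ℂ)‖ + ‖q ^ n‖ := norm_sub_le _ _
    _ = 2 := by rw [norm_pow, hq, one_pow, norm_one, one_add_one_eq_two]

theorem one_sub_exp_two_mul (z : ℂ) :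
    1 - Complex.exp (Complex.I * (2 * z)) =
      -2 * Complex.I * Complex.exp (Complex.I * z) * Complex.sin z := by
  have hneg : Complex.exp (Complex.I * z) * Complex.exp (-z * Complex.I) = 1 := by
    rw [← Complex.exp_add, ← Complex.exp_zero]
    ring_nf
  have hpos : Complex.exp (Complex.I * z) * Complex.exp (z * Complex.I) =
      Complex.exp (Complex.I * (2 * z)) := by
    rw [← Complex.exp_add]
    ring_nf
  rw [Complex.sin]
  linear_combination hpos - hneg +
    Complex.exp (Complex.I * z) * (Complex.exp (-z * Complex.I) - Complex.exp (z * Complex.I)) *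
      Complex.I_sq

end UnitCircle

section FourierIntegrals

open MeasureTheory
open scoped Real

theorem integral_cos_two_mul_int (n : ℤ) :
    ∫ θ in (0)..(π / 2), Real.cos (2 * n * θ) = if n = 0 then π / 2 else 0 := by
  split_ifs with hn
  · simp [hn]
  · have hn : (2 * n : ℝ) ≠ 0 := by positivity
    rw [intervalIntegral.integral_comp_mul_left _ hn, integral_cos,
      show 2 * n * (π / 2) = n * π by ring, Real.sin_int_mul_pi]
    simp

theorem integral_cos_two_mul_int_mul_sin_sq (n : ℤ) :
    ∫ θ in (0)..(π / 2), Real.cos (2 * n * θ) * Real.sin θ ^ 2 =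
      π / 8 * ((if n = 0 then 2 else 0) - (if n + 1 = 0 then 1 else 0) -
        if n - 1 = 0 then 1 else 0) := by
  have product_to_sum (θ : ℝ) : Real.cos (2 * n * θ) * Real.sin θ ^ 2 =
      Real.cos (2 * n * θ) / 2 - Real.cos (2 * (n + 1 : ℤ) * θ) / 4 -
        Real.cos (2 * (n - 1 : ℤ) * θ) / 4 := by
    rw [Real.sin_sq_eq_half_sub]
    push_cast
    rw [show 2 * (n + 1 : ℝ) * θ = 2 * n * θ + 2 * θ by ring,
      show 2 * (n - 1 : ℝ) * θ = 2 * n * θ - 2 * θ by ring, Real.cos_add, Real.cos_sub]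
    ring
  have integrable (m : ℤ) (d : ℝ) :
      IntervalIntegrable (fun θ => Real.cos (2 * m * θ) / d) volume 0 (π / 2) :=
    Continuous.intervalIntegrable (by fun_prop) _ _
  simp only [product_to_sum]
  rw [intervalIntegral.integral_sub ((integrable _ _).sub (integrable _ _)) (integrable _ _),
    intervalIntegral.integral_sub (integrable _ _) (integrable _ _)]
  simp only [intervalIntegral.integral_div, integral_cos_two_mul_int]
  split_ifs <;> ring

theorem four_pow_div_le_choose_mul {r : ℕ} (hr : 4 ≤ r) :
    π / 4 * (4 ^ r / (12 * r ^ 7)) ≤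
      2 * (r + r).choose r / (3 * π ^ 2) * (1 / (r * r)) ^ 3 := by
  have hbinom : (4 : ℝ) ^ r ≤ r * (r + r).choose r := by
    rw [← two_mul, ← Nat.centralBinom]
    exact_mod_cast (Nat.four_pow_lt_mul_centralBinom r hr).le
  have hπ3 : π ^ 3 ≤ 32 :=
    (pow_le_pow_left₀ Real.pi_nonneg Real.pi_lt_d2.le 3).trans (by norm_num)
  calc π / 4 * (4 ^ r / (12 * r ^ 7))
      ≤ π / 4 * (r * (r + r).choose r / (12 * r ^ 7)) := by gcongr
    _ = π ^ 3 * ((r + r).choose r / (48 * π ^ 2 * r ^ 6)) := by field_simp; ring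
    _ ≤ 32 * ((r + r).choose r / (48 * π ^ 2 * r ^ 6)) := by gcongr
    _ = _ := by field_simp; ring

end FourierIntegrals

open Polynomial in
/-- The Gaussian binomial coefficient `binom(a + b, a)_q` as a polynomial in `q`, given by the
`q`-Pascal recursion. -/
noncomputable def qBinomial : ℕ → ℕ → ℕ[X]
  | 0, _ => 1
  | _ + 1, 0 => 1
  | a + 1, b + 1 => qBinomial (a + 1) b + X ^ (b + 1) * qBinomial a (b + 1)

namespace qBinomial

section Recursion

open Polynomial

@[simp] theorem zero_left (b : ℕ) : qBinomial 0 b = 1 := by rw [qBinomial]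

@[simp] theorem zero_right (a : ℕ) : qBinomial a 0 = 1 := by cases a <;> rw [qBinomial]

theorem succ_succ (a b : ℕ) :
    qBinomial (a + 1) (b + 1) = qBinomial (a + 1) b + X ^ (b + 1) * qBinomial a (b + 1) := by
  rw [qBinomial]

end Recursion

section Counting

open Polynomial

/-- The multisets of `a` natural numbers, each at most `b`. They encode the partitions that fit in
an `a × b` rectangle, padded with zeros to exactly `a` parts. -/
def boxMultisets (a b : ℕ) : Finset (Multiset ℕ) :=
  ((Finset.range (b + 1)).sym a).image (↑)

theorem mem_boxMultisets {a b : ℕ} {s : Multiset ℕ} :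
    s ∈ boxMultisets a b ↔ Multiset.card s = a ∧ ∀ i ∈ s, i ≤ b := by
  simp only [boxMultisets, Finset.mem_image, Finset.mem_sym_iff, Finset.mem_range,
    Nat.lt_succ_iff]
  exact ⟨fun ⟨t, ht, hts⟩ => hts ▸ ⟨t.2, ht⟩, fun ⟨hcard, hs⟩ => ⟨⟨s, hcard⟩, hs, rfl⟩⟩

theorem boxMultisets_succ_succ (a b : ℕ) :
    boxMultisets (a + 1) (b + 1) =
      boxMultisets (a + 1) b ∪ (boxMultisets a (b + 1)).image (Multiset.cons (b + 1)) := by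
  ext s
  simp only [Finset.mem_union, Finset.mem_image, mem_boxMultisets]
  constructor
  · rintro ⟨hcard, hs⟩
    by_cases hb : b + 1 ∈ s
    · obtain ⟨t, rfl⟩ := Multiset.exists_cons_of_mem hb
      exact .inr ⟨t, ⟨by simpa using hcard, fun i hi => hs i (Multiset.mem_cons_of_mem hi)⟩, rfl⟩
    · exact .inl ⟨hcard, fun i hi =>
        Nat.le_of_lt_succ ((hs i hi).lt_of_ne (ne_of_mem_of_not_mem hi hb))⟩
  · rintro (⟨hcard, hs⟩ | ⟨t, ⟨hcard, ht⟩, rfl⟩)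
    · exact ⟨hcard, fun i hi => (hs i hi).trans b.le_succ⟩
    · simpa [hcard] using ht

theorem sum_boxMultisets_X_pow (a b : ℕ) :
    ∑ s ∈ boxMultisets a b, (X : ℕ[X]) ^ s.sum = qBinomial a b := by
  induction a, b using qBinomial.induct with
  | case1 b =>
    have : boxMultisets 0 b = {0} := by ext s; simp +contextual [mem_boxMultisets]
    simp [this]
  | case2 a =>
    have : boxMultisets (a + 1) 0 = {Multiset.replicate (a + 1) 0} := by
      ext s
      rw [Finset.mem_singleton, Multiset.eq_replicate]
      simp [mem_boxMultisets]
    simp [this]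
  | case3 a b ihb iha =>
    have hdisj : Disjoint (boxMultisets (a + 1) b)
        ((boxMultisets a (b + 1)).image (Multiset.cons (b + 1))) := by
      rw [Finset.disjoint_right]
      rintro _ hs h
      obtain ⟨t, -, rfl⟩ := Finset.mem_image.1 hs
      have := (mem_boxMultisets.1 h).2 (b + 1) (Multiset.mem_cons_self _ _)
      omega
    rw [boxMultisets_succ_succ, Finset.sum_union hdisj, ihb,
      Finset.sum_image fun _ _ _ _ h => (Multiset.cons_inj_right _).1 h, succ_succ, ← iha,
      Finset.mul_sum]
    simp only [Multiset.sum_cons, pow_add]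

theorem coeff_eq_card (a b k : ℕ) :
    (qBinomial a b).coeff k = (boxMultisets a b |>.filter (·.sum = k)).card := by
  rw [← sum_boxMultisets_X_pow, finsetSum_coeff]
  simp [coeff_X_pow, eq_comm]

theorem rectPartitions_eq_coeff (k a b : ℕ) :
    rectPartitions k a b = (qBinomial a b).coeff k := by
  have hpos (π : Nat.Partition k) : π.parts.filter (· ≠ 0) = π.parts :=
    Multiset.filter_eq_self.2 fun i hi => (π.parts_pos hi).ne'
  have hmem {s : Multiset ℕ} : s ∈ (boxMultisets a b).filter (·.sum = k) ↔
      (Multiset.card s = a ∧ ∀ i ∈ s, i ≤ b) ∧ s.sum = k := by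
    rw [Finset.mem_filter, mem_boxMultisets]
  rw [coeff_eq_card, ← Nat.card_eq_finsetCard, rectPartitions]
  refine Nat.card_congr
    { toFun := fun π => ⟨π.1.parts + .replicate (a - Multiset.card π.1.parts) 0, hmem.2 ?_⟩
      invFun := fun s => ⟨.ofSums k s (hmem.1 s.2).2, ?_, fun i hi => ?_⟩
      left_inv := fun π => ?_
      right_inv := fun s => ?_ }
  · refine ⟨⟨by simp [π.2.1], fun i hi => ?_⟩, by simp [π.1.parts_sum]⟩
    rcases Multiset.mem_add.1 hi with hi | hi
    · exact π.2.2 i hi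
    · simp [Multiset.eq_of_mem_replicate hi]
  · exact (Multiset.card_le_card (Multiset.filter_le _ _)).trans (hmem.1 s.2).1.1.le
  · exact (hmem.1 s.2).1.2 i (Multiset.mem_filter.1 hi).1
  · ext1
    ext1
    change Multiset.filter _ (_ + _) = _
    rw [Multiset.filter_add, hpos, Multiset.filter_eq_nil.2, add_zero]
    simp +contextual [Multiset.mem_replicate]
  · ext1
    have h := filter_ne_zero_add_replicate s.1
    rwa [(hmem.1 s.2).1.1] at h

end Counting

section Evaluation

open Polynomial

theorem aeval_succ_succ {R : Type*} [CommSemiring R] (q : R) (a b : ℕ) :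
    aeval q (qBinomial (a + 1) (b + 1)) =
      aeval q (qBinomial (a + 1) b) + q ^ (b + 1) * aeval q (qBinomial a (b + 1)) := by
  simp [succ_succ]

theorem one_sub_pow_mul_aeval_succ {R : Type*} [CommRing R] (q : R) (a b : ℕ) :
    (1 - q ^ (a + 1)) * aeval q (qBinomial (a + 1) b) =
        (1 - q ^ (a + b + 1)) * aeval q (qBinomial a b) ∧
      (1 - q ^ (b + 1)) * aeval q (qBinomial a (b + 1)) =
        (1 - q ^ (a + b + 1)) * aeval q (qBinomial a b) := by
  have left_of_right (a : ℕ) (hright : ∀ b, (1 - q ^ (b + 1)) * aeval q (qBinomial a (b + 1)) =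
      (1 - q ^ (a + b + 1)) * aeval q (qBinomial a b)) (b : ℕ) :
      (1 - q ^ (a + 1)) * aeval q (qBinomial (a + 1) b) =
        (1 - q ^ (a + b + 1)) * aeval q (qBinomial a b) := by
    induction b with
    | zero => simp
    | succ b ih =>
      rw [aeval_succ_succ]
      linear_combination ih - hright b
  have right (a b : ℕ) : (1 - q ^ (b + 1)) * aeval q (qBinomial a (b + 1)) =
      (1 - q ^ (a + b + 1)) * aeval q (qBinomial a b) := by
    induction a generalizing b with
    | zero => simp
    | succ a ih =>
      rw [aeval_succ_succ]
      linear_combination q ^ (b + 1) * ih b - q ^ (b + 1) * left_of_right a ih b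
  exact ⟨left_of_right a (right a) b, right a b⟩

theorem aeval_mul_prod {R : Type*} [CommRing R] (q : R) (a b : ℕ) :
    aeval q (qBinomial a b) * ∏ i ∈ Finset.range a, (q ^ (i + 1) - 1) =
      ∏ i ∈ Finset.range a, (q ^ (i + b + 1) - 1) := by
  induction a with
  | zero => simp
  | succ a ih =>
    rw [Finset.prod_range_succ, Finset.prod_range_succ, ← ih]
    linear_combination -(∏ i ∈ Finset.range a, (q ^ (i + 1) - 1)) *
      (one_sub_pow_mul_aeval_succ q a b).1

theorem eval_eq_prod_div {B : ℕ} (hB : 1 < B) (a b : ℕ) :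
    (qBinomial a b).eval B =
      (∏ i ∈ Finset.range a, (B ^ (i + b + 1) - 1)) / ∏ i ∈ Finset.range a, (B ^ (i + 1) - 1) := by
  have hpow (n : ℕ) : 1 < B ^ (n + 1) := Nat.one_lt_pow n.succ_ne_zero hB
  refine (Nat.div_eq_of_eq_mul_left
    (Finset.prod_pos fun i _ => Nat.sub_pos_of_lt (hpow i)) ?_).symm
  zify [(hpow _).le]
  rw [← aeval_mul_prod, ← eq_natCast (algebraMap ℕ ℤ) B, aeval_algebraMap_apply,
    eq_natCast (algebraMap ℕ ℤ), coe_aeval_eq_eval]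

theorem comm (a b : ℕ) : qBinomial a b = qBinomial b a := by
  have h : aeval (X : ℤ[X]) (qBinomial a b) = aeval X (qBinomial b a) := by
    induction a with
    | zero => simp
    | succ a ih =>
      have hne : 1 - (X : ℤ[X]) ^ (a + 1) ≠ 0 := fun h => by
        simpa using congrArg (coeff · 0) h
      have hleft := (one_sub_pow_mul_aeval_succ (X : ℤ[X]) a b).1
      have hright := (one_sub_pow_mul_aeval_succ (X : ℤ[X]) b a).2
      rw [add_comm b a] at hright
      exact mul_left_cancel₀ hne (hleft.trans ((congrArg _ ih).trans hright.symm))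
  rw [aeval_X_left_eq_map, aeval_X_left_eq_map] at h
  exact map_injective _ Nat.cast_injective h

theorem succ_succ' (a b : ℕ) :
    qBinomial (a + 1) (b + 1) = qBinomial a (b + 1) + X ^ (a + 1) * qBinomial (a + 1) b := by
  rw [comm, succ_succ, comm, comm b]

theorem eval_one (a b : ℕ) : (qBinomial a b).eval 1 = (a + b).choose a := by
  induction a, b using qBinomial.induct with
  | case1 b => simp
  | case2 a => simp
  | case3 a b ihb iha =>
    rw [succ_succ', eval_add, eval_mul, ihb, iha, Nat.add_right_comm a 1 (b + 1),
      Nat.choose_succ_succ, Nat.add_right_comm a 1 b]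
    simp [Nat.add_assoc]

end Evaluation

section Coefficients

open Polynomial

theorem natDegree_le (a b : ℕ) : (qBinomial a b).natDegree ≤ a * b := by
  induction a, b using qBinomial.induct with
  | case1 b => simp
  | case2 a => simp
  | case3 a b ihb iha =>
    rw [succ_succ]
    refine natDegree_add_le_of_degree_le (ihb.trans (by gcongr; omega)) ?_
    refine natDegree_mul_le.trans ?_
    rw [natDegree_X_pow, Nat.succ_mul, Nat.add_comm]
    gcongr

theorem coeff_le_choose (a b k : ℕ) : (qBinomial a b).coeff k ≤ (a + b).choose a := by
  rcases eq_or_ne ((qBinomial a b).coeff k) 0 with hk | hk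
  · omega
  rw [← eval_one, eval_eq_sum]
  simpa [Polynomial.sum] using Finset.single_le_sum (f := (qBinomial a b).coeff)
    (fun i _ => Nat.zero_le _) (mem_support_iff.2 hk)

theorem reflect_eq_self (a b : ℕ) : reflect (a * b) (qBinomial a b) = qBinomial a b := by
  induction a, b using qBinomial.induct with
  | case1 b => simp
  | case2 a => simp
  | case3 a b ihb iha =>
    have hX : reflect (b + 1) (X ^ (b + 1) : ℕ[X]) = 1 := by simp
    have hleft : reflect ((a + 1) * (b + 1)) (X ^ (b + 1) * qBinomial a (b + 1)) =
        qBinomial a (b + 1) := by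
      rw [show (a + 1) * (b + 1) = b + 1 + a * (b + 1) by ring,
        reflect_mul _ _ (natDegree_X_pow_le _) (natDegree_le _ _), hX, iha, one_mul]
    have hright : reflect ((a + 1) * (b + 1)) (qBinomial (a + 1) b) =
        X ^ (a + 1) * qBinomial (a + 1) b := by
      rw [← one_mul (qBinomial (a + 1) b), Nat.mul_succ, Nat.add_comm,
        reflect_mul _ _ (by simp) (natDegree_le _ _), ihb, reflect_one, one_mul]
    rw [succ_succ, reflect_add, hleft, hright, ← succ_succ, succ_succ', add_comm]

theorem coeff_mul_sub {a b k : ℕ} (hk : k ≤ a * b) :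
    (qBinomial a b).coeff (a * b - k) = (qBinomial a b).coeff k := by
  conv_rhs => rw [← reflect_eq_self, coeff_reflect, revAt_le hk]

/-- The difference of consecutive coefficients of a Gaussian binomial coefficient, the coefficient
of `q ^ (-1)` being `0`. -/
noncomputable def gap (a b : ℕ) : ℕ → ℤ
  | 0 => (qBinomial a b).coeff 0
  | k + 1 => (qBinomial a b).coeff (k + 1) - (qBinomial a b).coeff k

theorem gap_comm (a b k : ℕ) : gap a b k = gap b a k := by
  cases k <;> rw [gap, gap, comm]

end Coefficients

section HighestWeight

open Module MvPolynomial

/-- The bidegree of the variables `X 0, …, X b`: each has degree `1`, and `X i` has index `i`.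
Grading by `ℤ × ℤ` lets the index be lowered by one without truncation. -/
def bidegree (b : ℕ) (i : Fin (b + 1)) : ℤ × ℤ := (1, i)

/-- The polynomials in `X 0, …, X b` of bidegree `(m, k)`. Their dimension is the coefficient of
`q ^ k` in the Gaussian binomial coefficient `qBinomial m b`. -/
noncomputable abbrev bigraded (b : ℕ) (m k : ℤ) : Submodule ℚ (MvPolynomial (Fin (b + 1)) ℚ) :=
  weightedHomogeneousSubmodule ℚ (bidegree b) (m, k)

/-- The lowering operator `X i ↦ i X (i - 1)` of `sl₂`. The factor `i` vanishes where `i - 1` wraps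
around in `Fin (b + 1)`. -/
noncomputable def lower (b : ℕ) :
    Derivation ℚ (MvPolynomial (Fin (b + 1)) ℚ) (MvPolynomial (Fin (b + 1)) ℚ) :=
  mkDerivation ℚ fun i => (i : ℚ) • X (i - 1)

/-- The raising operator `X i ↦ (b - i) X (i + 1)` of `sl₂`. The factor `b - i` vanishes where
`i + 1` wraps around in `Fin (b + 1)`. -/
noncomputable def raise (b : ℕ) :
    Derivation ℚ (MvPolynomial (Fin (b + 1)) ℚ) (MvPolynomial (Fin (b + 1)) ℚ) :=
  mkDerivation ℚ fun i => (b - i : ℚ) • X (i + 1)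

variable {b : ℕ} {m k : ℤ}

theorem bigraded_eq_bot (hk : k < 0) : bigraded b m k = ⊥ := by
  refine (Submodule.eq_bot_iff _).2 fun p hp => ?_
  ext d
  by_contra hd
  have hweight := congrArg Prod.snd (hp hd)
  have hnonneg : 0 ≤ (Finsupp.weight (bidegree b) d).2 := by
    rw [Finsupp.weight_apply, Finsupp.sum, Prod.snd_sum]
    exact Finset.sum_nonneg fun i _ => smul_nonneg (Nat.zero_le _) (Int.natCast_nonneg i)
  omega

theorem lower_mem {p : MvPolynomial (Fin (b + 1)) ℚ} (hp : p ∈ bigraded b m k) :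
    lower b p ∈ bigraded b m (k - 1) := by
  have hX (i : Fin (b + 1)) : IsWeightedHomogeneous (bidegree b)
      ((i : ℚ) • (X (i - 1) : MvPolynomial (Fin (b + 1)) ℚ)) (bidegree b i + (0, -1)) := by
    rcases eq_or_ne i 0 with rfl | hi
    · simpa using isWeightedHomogeneous_zero _ _ _
    · have hval := Fin.val_sub_one_of_ne_zero hi
      have hpos : 0 < (i : ℕ) := Fin.pos_iff_ne_zero.2 hi
      rw [smul_eq_C_mul]
      convert (isWeightedHomogeneous_X ℚ (bidegree b) (i - 1)).C_mul _ using 1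
      ext <;> simp [bidegree]; omega
  have h := isWeightedHomogeneous_mkDerivation hX hp
  rwa [Prod.mk_add_mk, add_zero, ← sub_eq_add_neg] at h

theorem raise_mem {p : MvPolynomial (Fin (b + 1)) ℚ} (hp : p ∈ bigraded b m k) :
    raise b p ∈ bigraded b m (k + 1) := by
  have hX (i : Fin (b + 1)) : IsWeightedHomogeneous (bidegree b)
      ((b - i : ℚ) • (X (i + 1) : MvPolynomial (Fin (b + 1)) ℚ)) (bidegree b i + (0, 1)) := by
    rcases eq_or_ne i (Fin.last b) with rfl | hi
    · simpa using isWeightedHomogeneous_zero _ _ _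
    · have hval := Fin.val_add_one_of_lt (Fin.lt_last_iff_ne_last.2 hi)
      rw [smul_eq_C_mul]
      convert (isWeightedHomogeneous_X ℚ (bidegree b) (i + 1)).C_mul _ using 1
      ext <;> simp [bidegree, hval]
  have h := isWeightedHomogeneous_mkDerivation hX hp
  rwa [Prod.mk_add_mk, add_zero] at h

theorem commutator_lower_raise_X (i : Fin (b + 1)) :
    ⁅lower b, raise b⁆ (X i) = (b - 2 * i : ℚ) • X i := by
  have hlr : lower b (raise b (X i)) = ((b - i) * (i + 1) : ℚ) • X i := by
    rcases eq_or_ne i (Fin.last b) with rfl | hi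
    · simp [raise]
    · simp [lower, raise, Fin.val_add_one_of_lt (Fin.lt_last_iff_ne_last.2 hi), smul_smul]
  have hrl : raise b (lower b (X i)) = (i * (b - (i - 1)) : ℚ) • X i := by
    rcases eq_or_ne i 0 with rfl | hi
    · simp [lower]
    · have hpos : 1 ≤ (i : ℕ) := Fin.pos_iff_ne_zero.2 hi
      simp [lower, raise, Fin.val_sub_one_of_ne_zero hi, smul_smul, Nat.cast_sub hpos]
  rw [Derivation.commutator_apply, hlr, hrl, ← sub_smul]
  congr 1
  ring

theorem lower_raise {p : MvPolynomial (Fin (b + 1)) ℚ} (hp : p ∈ bigraded b m k) :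
    lower b (raise b p) = raise b (lower b p) + ((b * m - 2 * k : ℤ) : ℚ) • p := by
  let φ : ℤ × ℤ →+ ℚ :=
    (Int.castAddHom ℚ).comp ((b : ℤ) • AddMonoidHom.fst ℤ ℤ - (2 : ℤ) • AddMonoidHom.snd ℤ ℤ)
  have hcomm : ⁅lower b, raise b⁆ = mkDerivation ℚ fun i => φ (bidegree b i) • X i :=
    derivation_ext fun i => by simp [commutator_lower_raise_X, φ, bidegree]
  rw [← sub_eq_iff_eq_add', ← Derivation.commutator_apply, hcomm, mkDerivation_smul_X_apply φ hp]
  simp [φ]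

theorem weight_bidegree (d : Fin (b + 1) →₀ ℕ) :
    Finsupp.weight (bidegree b) d =
      ((Multiset.card (d.toMultiset.map Fin.val) : ℤ), ((d.toMultiset.map Fin.val).sum : ℤ)) := by
  induction d using Finsupp.induction_linear with
  | zero => rfl
  | add d e hd he => simp [hd, he]
  | single i n =>
    simp [bidegree, Finsupp.weight_single, Finsupp.toMultiset_single, Multiset.map_nsmul,
      Multiset.sum_nsmul]

theorem image_map_val_toMultiset (b m k : ℕ) :
    (fun d : Fin (b + 1) →₀ ℕ => d.toMultiset.map Fin.val) ''
        {d | Finsupp.weight (bidegree b) d = ((m : ℤ), (k : ℤ))} =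
      ((boxMultisets m b).filter (·.sum = k) : Finset (Multiset ℕ)) := by
  ext s
  simp only [weight_bidegree, Prod.mk.injEq, Nat.cast_inj, Set.mem_image, Set.mem_ofPred_eq,
    Finset.coe_filter, mem_boxMultisets]
  constructor
  · rintro ⟨d, ⟨hcard, hsum⟩, rfl⟩
    refine ⟨⟨hcard, fun i hi => ?_⟩, hsum⟩
    obtain ⟨j, -, rfl⟩ := Multiset.mem_map.1 hi
    exact j.is_le
  · rintro ⟨⟨hcard, hle⟩, hsum⟩
    lift s to Multiset (Fin (b + 1)) using fun i hi => Nat.lt_succ_of_le (hle i hi)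
    exact ⟨s.toFinsupp, by simp [← hcard, ← hsum], by simp⟩

theorem injective_map_val_toMultiset (b : ℕ) :
    Function.Injective fun d : Fin (b + 1) →₀ ℕ => d.toMultiset.map Fin.val :=
  (Multiset.map_injective Fin.val_injective).comp Multiset.toFinsupp.symm.injective

theorem bigraded_eq_restrictSupport :
    bigraded b m k = restrictSupport ℚ {d | Finsupp.weight (bidegree b) d = (m, k)} :=
  weightedHomogeneousSubmodule_eq_finsupp_supported _ _ _

instance finite_bigraded (b m k : ℕ) : Module.Finite ℚ (bigraded b m k) := by
  have hfinite : {d | Finsupp.weight (bidegree b) d = ((m : ℤ), (k : ℤ))}.Finite :=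
    .of_finite_image (image_map_val_toMultiset b m k ▸ Finset.finite_toSet _)
      (injective_map_val_toMultiset b).injOn
  have := hfinite.to_subtype
  rw [bigraded_eq_restrictSupport]
  exact .of_basis (basisRestrictSupport ℚ _)

theorem finrank_bigraded (b m k : ℕ) :
    finrank ℚ (bigraded b m k) = (qBinomial m b).coeff k := by
  rw [bigraded_eq_restrictSupport,
    finrank_eq_nat_card_basis (basisRestrictSupport ℚ _), Nat.card_coe_set_eq,
    ← Set.ncard_image_of_injective _ (injective_map_val_toMultiset b), image_map_val_toMultiset,
    Set.ncard_coe_finset, coeff_eq_card]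

/-- The highest weight vectors of bidegree `(m, k)` for the action of `sl₂` by `lower` and
`raise`. -/
noncomputable def highestWeight (b : ℕ) (m k : ℤ) : Submodule ℚ (MvPolynomial (Fin (b + 1)) ℚ) :=
  bigraded b m k ⊓ (lower b).toLinearMap.ker

instance finite_highestWeight (b m k : ℕ) : Module.Finite ℚ (highestWeight b m k) :=
  Submodule.finiteDimensional_inf_left _ _

theorem map_lower_bigraded (b m k : ℕ) (hk : 2 * (k + 1) ≤ b * m) :
    (bigraded b m (k + 1 : ℕ)).map (lower b).toLinearMap = bigraded b m k := by
  refine le_antisymm ?_ ?_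
  · rintro _ ⟨p, hp, rfl⟩
    simpa using lower_mem hp
  · exact le_map_of_commutator (V := bigraded b m) (U := (raise b).toLinearMap) (w := b * m)
      (fun _ => bigraded_eq_bot) (fun _ _ => lower_mem) (fun _ _ => raise_mem)
      (fun _ _ => lower_raise) (by zify at hk; linarith)

theorem finrank_highestWeight (b m k : ℕ) (hk : 2 * k ≤ b * m) :
    finrank ℚ (highestWeight b m k) = gap m b k := by
  cases k with
  | zero =>
    have hle : bigraded b m (0 : ℕ) ≤ (lower b).toLinearMap.ker := fun p hp => by
      have h := lower_mem hp
      rwa [bigraded_eq_bot (by simp), Submodule.mem_bot] at h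
    rw [highestWeight, inf_eq_left.2 hle, finrank_bigraded, gap]
  | succ k =>
    have hker : highestWeight b m (k + 1 : ℕ) =
        ((lower b).toLinearMap.domRestrict (bigraded b m (k + 1 : ℕ))).ker.map
          (bigraded b m (k + 1 : ℕ)).subtype := by
      rw [LinearMap.ker_domRestrict, Submodule.map_comap_subtype, highestWeight]
    have hrank := LinearMap.finrank_range_add_finrank_ker
      ((lower b).toLinearMap.domRestrict (bigraded b m (k + 1 : ℕ)))
    rw [LinearMap.range_domRestrict, map_lower_bigraded b m k hk, finrank_bigraded,
      finrank_bigraded] at hrank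
    rw [hker, Submodule.finrank_map_subtype_eq, gap, ← hrank]
    push_cast
    ring

theorem mul_mem_highestWeight {m₁ m₂ k₁ k₂ : ℤ} {p q : MvPolynomial (Fin (b + 1)) ℚ}
    (hp : p ∈ highestWeight b m₁ k₁) (hq : q ∈ highestWeight b m₂ k₂) :
    p * q ∈ highestWeight b (m₁ + m₂) (k₁ + k₂) := by
  have hlp : lower b p = 0 := hp.2
  have hlq : lower b q = 0 := hq.2
  refine ⟨IsWeightedHomogeneous.mul hp.1 hq.1, ?_⟩
  change lower b (p * q) = 0
  rw [Derivation.leibniz, hlp, hlq, smul_zero, smul_zero, add_zero]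

-- Multiplication by a nonzero highest weight vector embeds one space of such vectors in another.
theorem gap_le_gap_add {a₁ a₂ k₁ k₂ : ℕ} (h₁ : 2 * k₁ ≤ b * a₁) (h₂ : 2 * k₂ ≤ b * a₂)
    (hpos : 0 < gap a₂ b k₂) : gap a₁ b k₁ ≤ gap (a₁ + a₂) b (k₁ + k₂) := by
  rw [← finrank_highestWeight b a₂ k₂ h₂, Nat.cast_pos] at hpos
  rw [← finrank_highestWeight b a₁ k₁ h₁, ← finrank_highestWeight b _ _ (by lia), Nat.cast_le]
  obtain ⟨q, hq, hq0⟩ := Submodule.exists_mem_ne_zero_of_ne_bot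
    (Submodule.one_le_finrank_iff.1 hpos)
  have hinj : Function.Injective (LinearMap.mulRight ℚ q) := mul_left_injective₀ hq0
  rw [(Submodule.equivMapOfInjective _ hinj _).finrank_eq]
  refine Submodule.finrank_mono ?_
  rintro _ ⟨p, hp, rfl⟩
  exact_mod_cast mul_mem_highestWeight hp hq

end HighestWeight

section StrictUnimodality

open Polynomial

/-- The value of `qBinomial a b` at `2 ^ 32`, whose base-`2 ^ 32` digits are the coefficients when
`a + b < 32`. -/
def packed (a b : ℕ) : ℕ :=
  (∏ i ∈ Finset.range a, ((2 ^ 32) ^ (i + b + 1) - 1)) /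
    ∏ i ∈ Finset.range a, ((2 ^ 32) ^ (i + 1) - 1)

theorem packed_div_pow_mod {a b : ℕ} (hab : a + b < 32) (k : ℕ) :
    packed a b / (2 ^ 32) ^ k % 2 ^ 32 = (qBinomial a b).coeff k := by
  rw [packed, ← eval_eq_prod_div (by norm_num)]
  refine eval_div_pow_mod (fun j => ?_) k
  calc (qBinomial a b).coeff j ≤ (a + b).choose a := coeff_le_choose a b j
    _ ≤ 2 ^ (a + b) := Nat.choose_le_two_pow _ _
    _ < 2 ^ 32 := Nat.pow_lt_pow_right one_lt_two hab

theorem packed_digits_lt : ∀ a ∈ Finset.Ico 8 16, ∀ b ∈ Finset.Ico 8 16,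
    ∀ k ∈ Finset.Ico 1 (a * b / 2),
      packed a b / (2 ^ 32) ^ k % 2 ^ 32 < packed a b / (2 ^ 32) ^ (k + 1) % 2 ^ 32 := by
  decide +kernel

theorem gap_pos_of_lt_sixteen {a b k : ℕ} (ha : a ∈ Finset.Ico 8 16) (hb : b ∈ Finset.Ico 8 16)
    (hk1 : k ≠ 1) (hk : 2 * k ≤ a * b) : 0 < gap a b k := by
  rcases k with _ | k
  · have hmem : Multiset.replicate a 0 ∈ (boxMultisets a b).filter (·.sum = 0) := by
      simp +contextual [mem_boxMultisets, Multiset.mem_replicate]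
    rw [gap, Nat.cast_pos, coeff_eq_card]
    exact Finset.card_pos.2 ⟨_, hmem⟩
  · have hab : a + b < 32 := by
      rw [Finset.mem_Ico] at ha hb
      omega
    have hdigits := packed_digits_lt a ha b hb k (Finset.mem_Ico.2 (by omega))
    rw [packed_div_pow_mod hab, packed_div_pow_mod hab] at hdigits
    rw [gap, sub_pos, Nat.cast_lt]
    exact hdigits

theorem gap_pos_of_forall_lt_sixteen {a b k : ℕ} (hb : 8 ≤ b)
    (hbase : ∀ a ∈ Finset.Ico 8 16, ∀ k ≠ 1, 2 * k ≤ a * b → 0 < gap a b k) (ha : 8 ≤ a)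
    (hk1 : k ≠ 1) (hk : 2 * k ≤ a * b) : 0 < gap a b k := by
  induction a using Nat.strong_induction_on generalizing k with
  | _ a ih =>
  rcases lt_or_ge a 16 with ha16 | ha16
  · exact hbase a (Finset.mem_Ico.2 ⟨ha, ha16⟩) k hk1 hk
  obtain ⟨a, rfl⟩ := Nat.exists_eq_add_of_le ha
  have hsize : 8 * b ≤ a * b := Nat.mul_le_mul_right _ (by omega)
  rw [add_mul] at hk
  obtain ⟨k₁, k₂, rfl, hk₁, hk₂, hk₁1, hk₂1⟩ := exists_add_eq_of_ne_one (k := k)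
    (n₁ := 4 * b) (n₂ := a * b / 2) (by omega) (by omega) (by omega) hk1
  have hpos₁ : 0 < gap 8 b k₁ := ih 8 (by omega) le_rfl hk₁1 (by omega)
  have hpos₂ : 0 < gap a b k₂ := ih a (by omega) (by omega) hk₂1 (by omega)
  exact hpos₁.trans_le (gap_le_gap_add (by omega) (by rw [mul_comm b]; omega) hpos₂)

theorem gap_pos {a b k : ℕ} (ha : 8 ≤ a) (hb : 8 ≤ b) (hk1 : k ≠ 1) (hk : 2 * k ≤ a * b) :
    0 < gap a b k := by
  refine gap_pos_of_forall_lt_sixteen hb (fun a ha16 k hk1 hk => ?_) ha hk1 hk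
  rw [gap_comm]
  refine gap_pos_of_forall_lt_sixteen (Finset.mem_Ico.1 ha16).1 (fun b hb16 k hk1 hk => ?_) hb hk1
    (by rwa [mul_comm b])
  exact gap_pos_of_lt_sixteen hb16 ha16 hk1 hk

theorem gap_center_le {h a b b₁ k : ℕ} (hh : 4 ≤ h) (ha : 2 * h + 8 ≤ a) (hb : b₁ + 8 ≤ b)
    (hcenter : h * b₁ + 2 ≤ k) (hk : 2 * k ≤ a * b) :
    gap (2 * h) b₁ (h * b₁) ≤ gap a b k := by
  obtain ⟨a₂, rfl⟩ := Nat.exists_eq_add_of_le (show 2 * h ≤ a by omega)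
  obtain ⟨b₂, rfl⟩ := Nat.exists_eq_add_of_le (show b₁ ≤ b by omega)
  have hsize₁ : 4 * 8 ≤ h * b₂ := Nat.mul_le_mul hh (by omega)
  have hsize₂ : 8 * 8 ≤ a₂ * (b₁ + b₂) := Nat.mul_le_mul (by omega) (by omega)
  have harea : (2 * h + a₂) * (b₁ + b₂) = 2 * (h * b₁) + 2 * (h * b₂) + a₂ * (b₁ + b₂) := by ring
  obtain ⟨k₁, k₂, hsum, hk₁, hk₂, hk₁1, hk₂1⟩ := exists_add_eq_of_ne_one (k := k - h * b₁)
    (n₁ := h * b₂) (n₂ := a₂ * (b₁ + b₂) / 2) (by omega) (by omega) (by omega) (by omega)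
  obtain rfl : k = h * b₁ + k₁ + k₂ := by omega
  calc gap (2 * h) b₁ (h * b₁) = gap b₁ (2 * h) (h * b₁) := gap_comm _ _ _
    _ ≤ gap (b₁ + b₂) (2 * h) (h * b₁ + k₁) :=
      gap_le_gap_add (by lia) (by lia) (gap_pos (by omega) (by omega) hk₁1 (by lia))
    _ = gap (2 * h) (b₁ + b₂) (h * b₁ + k₁) := gap_comm _ _ _
    _ ≤ gap (2 * h + a₂) (b₁ + b₂) (h * b₁ + k₁ + k₂) :=
      gap_le_gap_add (by lia) (by rw [mul_comm (b₁ + b₂)]; omega)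
        (gap_pos (by omega) (by omega) hk₂1 (by omega))

end StrictUnimodality

section CircleMethod

open Polynomial MeasureTheory
open scoped Real

theorem coeff_prod_one_add_X {R : Type*} [CommSemiring R] (q : R) (a b : ℕ) :
    (∏ i ∈ Finset.range (a + b), (1 + C (q ^ i) * X)).coeff a =
      q ^ a.choose 2 * aeval q (qBinomial a b) := by
  have coeff_succ (n j : ℕ) :
      (∏ i ∈ Finset.range (n + 1), (1 + C (q ^ i) * X)).coeff (j + 1) =
        (∏ i ∈ Finset.range n, (1 + C (q ^ i) * X)).coeff (j + 1) +
          q ^ n * (∏ i ∈ Finset.range n, (1 + C (q ^ i) * X)).coeff j := by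
    rw [Finset.prod_range_succ, mul_add, mul_one, coeff_add, mul_left_comm, coeff_C_mul,
      coeff_mul_X]
  have coeff_eq_zero (n : ℕ) : (∏ i ∈ Finset.range n, (1 + C (q ^ i) * X)).coeff (n + 1) = 0 := by
    refine coeff_eq_zero_of_natDegree_lt (Nat.lt_succ_of_le ((natDegree_prod_le _ _).trans ?_))
    refine (Finset.sum_le_card_nsmul _ _ 1 fun i _ => ?_).trans (by simp)
    compute_degree
  induction a generalizing b with
  | zero => simp [coeff_zero_eq_eval_zero, eval_prod]
  | succ a iha =>
    induction b with
    | zero =>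
      have h := iha 0
      simp only [add_zero, zero_right, map_one, mul_one] at h ⊢
      rw [coeff_succ, coeff_eq_zero, h, zero_add, ← pow_add, Nat.choose_succ_succ' a 1,
        Nat.choose_one_right]
    | succ b ihb =>
      rw [← add_assoc, coeff_succ, ihb, Nat.add_right_comm a 1 b, add_assoc a b 1, iha,
        aeval_succ_succ, Nat.choose_succ_succ' a 1, Nat.choose_one_right]
      ring

theorem sq_norm_aeval_le {q : ℂ} (hq : ‖q‖ = 1) (hq1 : q ≠ 1) (a b : ℕ) :
    ‖aeval q (qBinomial a b)‖ ^ 2 ≤ 2 ^ (a + b) * Real.exp (2 / ‖1 - q‖) := by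
  have hcoeff := congrArg norm (coeff_prod_one_add_X q a b)
  rw [norm_mul, norm_pow, hq, one_pow, one_mul] at hcoeff
  rw [← hcoeff]
  refine sq_norm_coeff_le_of_forall_norm_eq_one (fun z hz => ?_) a
  have hre : (∑ i ∈ Finset.range (a + b), q ^ i * z).re ≤ 2 / ‖1 - q‖ := by
    refine (Complex.re_le_norm _).trans ?_
    rw [← Finset.sum_mul, norm_mul, hz, mul_one]
    exact norm_geom_sum_le_two_div hq hq1 _
  rw [eval_prod, norm_prod, ← Finset.prod_pow]
  calc ∏ i ∈ Finset.range (a + b), ‖(1 + C (q ^ i) * X).eval z‖ ^ 2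
      ≤ ∏ i ∈ Finset.range (a + b), (2 * Real.exp (q ^ i * z).re) := by
        refine Finset.prod_le_prod (fun _ _ => sq_nonneg _) fun i _ => ?_
        simpa using sq_norm_one_add_le_two_mul_exp_re (w := q ^ i * z) (by simp [hq, hz])
    _ = 2 ^ (a + b) * Real.exp (∑ i ∈ Finset.range (a + b), q ^ i * z).re := by
        rw [Finset.prod_mul_distrib, Finset.prod_const, Finset.card_range, ← Real.exp_sum,
          ← Complex.re_sum]
    _ ≤ 2 ^ (a + b) * Real.exp (2 / ‖1 - q‖) := by gcongr

/-- The Gaussian binomial coefficient on the unit circle, at `q = exp (2iθ)`, divided by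
`exp (iabθ)`. Since the coefficients are palindromic, this is a real number. -/
noncomputable def cosSum (a b : ℕ) (θ : ℝ) : ℝ :=
  ∑ k ∈ Finset.range (a * b + 1), (qBinomial a b).coeff k * Real.cos ((2 * k - a * b) * θ)

theorem sum_coeff_mul_sin_eq_zero (a b : ℕ) (θ : ℝ) :
    ∑ k ∈ Finset.range (a * b + 1),
      ((qBinomial a b).coeff k : ℝ) * Real.sin ((2 * k - a * b) * θ) = 0 := by
  refine self_eq_neg.1 ?_
  rw [← Finset.sum_neg_distrib]
  nth_rw 1 [← Finset.sum_range_reflect]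
  refine Finset.sum_congr rfl fun k hk => ?_
  have hk : k ≤ a * b := Finset.mem_range_succ_iff.1 hk
  rw [Nat.add_sub_cancel, coeff_mul_sub hk, ← mul_neg, ← Real.sin_neg, Nat.cast_sub hk]
  push_cast
  ring_nf

theorem aeval_exp_eq_mul_cosSum (a b : ℕ) (θ : ℝ) :
    aeval (Complex.exp (Complex.I * (2 * θ : ℝ))) (qBinomial a b) =
      Complex.exp (Complex.I * (a * b * θ)) * cosSum a b θ := by
  have hterm (k : ℕ) : Complex.exp (Complex.I * (2 * θ : ℝ)) ^ k =
      Complex.exp (Complex.I * (a * b * θ)) * (Real.cos ((2 * k - a * b) * θ) +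
        Real.sin ((2 * k - a * b) * θ) * Complex.I) := by
    rw [Complex.ofReal_cos, Complex.ofReal_sin, ← Complex.exp_mul_I, ← Complex.exp_add,
      ← Complex.exp_nat_mul]
    congr 1
    push_cast
    ring
  have hcosSum : (cosSum a b θ : ℂ) = ∑ k ∈ Finset.range (a * b + 1), (qBinomial a b).coeff k *
      (Real.cos ((2 * k - a * b) * θ) + Real.sin ((2 * k - a * b) * θ) * Complex.I) := by
    have hsin := congrArg Complex.ofReal (sum_coeff_mul_sin_eq_zero a b θ)
    push_cast at hsin
    rw [cosSum]
    push_cast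
    simp only [mul_add, ← mul_assoc]
    rw [Finset.sum_add_distrib, ← Finset.sum_mul, hsin, zero_mul, add_zero]
  rw [aeval_eq_sum_range' (Nat.lt_succ_of_le (natDegree_le a b)), hcosSum, Finset.mul_sum]
  refine Finset.sum_congr rfl fun k _ => ?_
  rw [hterm, nsmul_eq_mul, mul_left_comm]

theorem sin_mul_cosSum_succ (a b : ℕ) (θ : ℝ) :
    Real.sin ((a + 1) * θ) * cosSum (a + 1) b θ = Real.sin ((a + b + 1) * θ) * cosSum a b θ := by
  have one_sub_exp_pow (n : ℕ) : 1 - Complex.exp (Complex.I * (2 * θ : ℝ)) ^ n =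
      -2 * Complex.I * Complex.exp (Complex.I * (n * θ)) * Real.sin (n * θ) := by
    rw [Complex.ofReal_sin, ← Complex.exp_nat_mul]
    convert one_sub_exp_two_mul (n * θ) using 3
    · push_cast
      ring
    · push_cast
      rfl
  have hexp : Complex.exp (Complex.I * ((a + b + 1 : ℕ) * θ)) *
      Complex.exp (Complex.I * (a * b * θ)) =
        Complex.exp (Complex.I * ((a + 1 : ℕ) * θ)) *
          Complex.exp (Complex.I * ((a + 1 : ℕ) * b * θ)) := by
    rw [← Complex.exp_add, ← Complex.exp_add]
    push_cast
    ring_nf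
  have h := (one_sub_pow_mul_aeval_succ (Complex.exp (Complex.I * (2 * θ : ℝ))) a b).1
  rw [one_sub_exp_pow, one_sub_exp_pow, aeval_exp_eq_mul_cosSum, aeval_exp_eq_mul_cosSum] at h
  have hunit : -2 * Complex.I * (Complex.exp (Complex.I * ((a + 1 : ℕ) * θ)) *
      Complex.exp (Complex.I * ((a + 1 : ℕ) * b * θ))) ≠ 0 := by
    simp [Complex.exp_ne_zero]
  refine Complex.ofReal_injective ?_
  rw [← Nat.cast_add_one, ← Nat.cast_add, ← Nat.cast_add_one, Complex.ofReal_mul,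
    Complex.ofReal_mul]
  refine mul_left_cancel₀ hunit ?_
  linear_combination h - 2 * Complex.I *
    (Real.sin ((a + b + 1 : ℕ) * θ) * cosSum a b θ) * hexp

theorem cosSum_nonneg {a b : ℕ} {θ : ℝ} (hθ : 0 < θ) (hab : (a + b) * θ < π) :
    0 ≤ cosSum a b θ := by
  induction a with
  | zero => simp [cosSum]
  | succ a ih =>
    push_cast at hab
    have hsin : 0 < Real.sin ((a + 1) * θ) :=
      Real.sin_pos_of_pos_of_lt_pi (by positivity) (by nlinarith [mul_nonneg b.cast_nonneg hθ.le])
    have hsin' : 0 ≤ Real.sin ((a + b + 1) * θ) :=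
      Real.sin_nonneg_of_nonneg_of_le_pi (by positivity) (by linarith)
    refine nonneg_of_mul_nonneg_right ?_ hsin
    rw [sin_mul_cosSum_succ]
    exact mul_nonneg hsin' (ih (by linarith))

theorem choose_div_two_le_cosSum {a b : ℕ} {θ : ℝ} (hθ : |a * b * θ| ≤ 1) :
    (a + b).choose a / 2 ≤ cosSum a b θ := by
  have hcos (k : ℕ) (hk : k ∈ Finset.range (a * b + 1)) :
      1 / 2 ≤ Real.cos ((2 * k - a * b) * θ) := by
    have hk : (k : ℝ) ≤ a * b := mod_cast Finset.mem_range_succ_iff.1 hk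
    have habs : |(2 * k - a * b) * θ| ≤ 1 := by
      refine le_trans ?_ hθ
      rw [abs_mul, abs_mul _ θ]
      refine mul_le_mul_of_nonneg_right ?_ (abs_nonneg θ)
      rw [abs_of_nonneg (by positivity : (0 : ℝ) ≤ a * b), abs_le]
      constructor <;> linarith [k.cast_nonneg (α := ℝ)]
    have h := Real.one_sub_sq_div_two_le_cos (x := (2 * k - a * b) * θ)
    have hsq := (sq_le_one_iff_abs_le_one _).2 habs
    linarith
  rw [cosSum, ← eval_one, eval_eq_sum_range' (Nat.lt_succ_of_le (natDegree_le a b)),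
    Nat.cast_sum, Finset.sum_div]
  refine Finset.sum_le_sum fun k hk => ?_
  rw [one_pow, mul_one, div_eq_mul_one_div]
  gcongr
  exact hcos k hk

theorem norm_aeval_exp_eq_abs_cosSum (a b : ℕ) (θ : ℝ) :
    ‖aeval (Complex.exp (Complex.I * (2 * θ : ℝ))) (qBinomial a b)‖ = |cosSum a b θ| := by
  have hunit : ‖Complex.exp (Complex.I * (a * b * θ))‖ = 1 :=
    mod_cast Complex.norm_exp_I_mul_ofReal (a * b * θ)
  rw [aeval_exp_eq_mul_cosSum, norm_mul, hunit, one_mul, Complex.norm_real, Real.norm_eq_abs]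

theorem sq_cosSum_le {θ : ℝ} (hθ : 0 < Real.sin θ) (a b : ℕ) :
    cosSum a b θ ^ 2 ≤ 2 ^ (a + b) * Real.exp (1 / Real.sin θ) := by
  have hnorm : ‖1 - Complex.exp (Complex.I * (2 * θ : ℝ))‖ = 2 * Real.sin θ := by
    rw [norm_sub_rev, Complex.norm_exp_I_mul_ofReal_sub_one, mul_div_cancel_left₀ θ two_ne_zero,
      Real.norm_of_nonneg (by positivity)]
  have hne : Complex.exp (Complex.I * (2 * θ : ℝ)) ≠ 1 := by
    rintro h
    rw [h, sub_self, norm_zero] at hnorm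
    linarith
  have h := sq_norm_aeval_le (Complex.norm_exp_I_mul_ofReal _) hne a b
  rwa [norm_aeval_exp_eq_abs_cosSum, sq_abs, hnorm, div_mul_cancel_left₀ two_ne_zero,
    ← one_div] at h

theorem abs_cosSum_le {r : ℕ} {θ : ℝ} (hθ : π ≤ 2 * r * θ) (hθ' : θ ≤ π / 2) :
    |cosSum r r θ| ≤ (7 / 2) ^ r := by
  have hr : 0 < (r : ℝ) := by
    refine r.cast_nonneg.lt_of_ne fun h => ?_
    rw [← h, mul_zero, zero_mul] at hθ
    exact hθ.not_gt Real.pi_pos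
  have hθ0 : 0 < θ := pos_of_mul_pos_right (Real.pi_pos.trans_le hθ) (by positivity)
  have hsin : 1 / r ≤ Real.sin θ := by
    refine le_trans ?_ (Real.mul_le_sin hθ0.le hθ')
    rw [div_mul_eq_mul_div, div_le_div_iff₀ hr Real.pi_pos]
    linarith
  have hsin0 : 0 < Real.sin θ := (by positivity : 0 < 1 / (r : ℝ)).trans_le hsin
  refine le_of_sq_le_sq ?_ (by positivity)
  calc |cosSum r r θ| ^ 2 ≤ 2 ^ (r + r) * Real.exp (1 / Real.sin θ) :=
        sq_abs (cosSum r r θ) ▸ sq_cosSum_le hsin0 r r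
    _ ≤ 2 ^ (r + r) * Real.exp r := by
        gcongr
        exact (one_div_le hsin0 hr).2 hsin
    _ = (4 * Real.exp 1) ^ r := by
        rw [mul_pow, ← Real.exp_nat_mul, mul_one, ← two_mul, pow_mul]
        norm_num
    _ ≤ ((7 / 2) ^ 2) ^ r := by
        gcongr
        linarith [Real.exp_one_lt_d9]
    _ = ((7 / 2) ^ r) ^ 2 := pow_right_comm _ _ _

theorem continuous_cosSum (a b : ℕ) : Continuous (cosSum a b) := by
  unfold cosSum
  fun_prop

theorem integral_cosSum_mul_sin_sq {a b c : ℕ} (hc : a * b = 2 * (c + 1)) :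
    ∫ θ in (0)..(π / 2), cosSum a b θ * Real.sin θ ^ 2 = π / 4 * gap a b (c + 1) := by
  have hcos (k : ℕ) (θ : ℝ) : Real.cos ((2 * k - a * b) * θ) =
      Real.cos (2 * (k - (c + 1) : ℤ) * θ) := by
    have hc : (a * b : ℝ) = 2 * (c + 1) := mod_cast hc
    rw [hc]
    push_cast
    ring_nf
  have hsymm : (qBinomial a b).coeff (c + 2) = (qBinomial a b).coeff c := by
    rw [← coeff_mul_sub (by omega : c ≤ a * b)]
    congr 1
    omega
  simp only [cosSum, hcos, Finset.sum_mul, mul_assoc]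
  rw [intervalIntegral.integral_finsetSum
    fun k _ => Continuous.intervalIntegrable (by fun_prop) _ _]
  have eq_center (k : ℕ) : (k - (c + 1) : ℤ) = 0 ↔ k = c + 1 := by omega
  have eq_pred (k : ℕ) : (k - (c + 1) + 1 : ℤ) = 0 ↔ k = c := by omega
  have eq_succ (k : ℕ) : (k - (c + 1) - 1 : ℤ) = 0 ↔ k = c + 2 := by omega
  simp only [intervalIntegral.integral_const_mul, ← mul_assoc (2 : ℝ) _ (_ : ℝ),
    integral_cos_two_mul_int_mul_sin_sq, eq_center, eq_pred, eq_succ]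
  have hmem : c ∈ Finset.range (a * b + 1) ∧ c + 1 ∈ Finset.range (a * b + 1) ∧
      c + 2 ∈ Finset.range (a * b + 1) := by
    simp only [Finset.mem_range]
    omega
  simp only [mul_sub, mul_ite, mul_zero, Finset.sum_sub_distrib, Finset.sum_ite_eq', hmem, if_true,
    hsymm, gap]
  push_cast
  ring

theorem neg_pow_le_cosSum {r : ℕ} {θ : ℝ} (hθ : 0 < θ) (hθ' : θ ≤ π / 2) :
    -(7 / 2) ^ r ≤ cosSum r r θ := by
  rcases le_or_gt π (2 * r * θ) with h | h
  · exact (abs_le.1 (abs_cosSum_le h hθ')).1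
  · exact (neg_nonpos.2 (by positivity)).trans (cosSum_nonneg hθ (by linarith))

theorem neg_pow_mul_le_integral_cosSum_mul_sin_sq {r : ℕ} {δ : ℝ} (hδ : 0 < δ)
    (hδ' : δ ≤ π / 2) :
    -(7 / 2) ^ r * (π / 2 - δ) ≤ ∫ θ in δ..(π / 2), cosSum r r θ * Real.sin θ ^ 2 := by
  have hcont := continuous_cosSum r r
  calc -(7 / 2) ^ r * (π / 2 - δ) = ∫ _ in δ..(π / 2), -(7 / 2 : ℝ) ^ r := by
        rw [intervalIntegral.integral_const, smul_eq_mul, mul_comm]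
    _ ≤ _ := by
        refine intervalIntegral.integral_mono_on hδ' intervalIntegrable_const
          (Continuous.intervalIntegrable (by fun_prop) _ _) fun θ hθ => ?_
        have hcos := neg_pow_le_cosSum (r := r) (hδ.trans_le hθ.1) hθ.2
        have hpow : 0 ≤ (7 / 2 : ℝ) ^ r := by positivity
        nlinarith [Real.sin_sq_le_one θ, sq_nonneg (Real.sin θ)]

theorem choose_mul_le_integral_cosSum_mul_sin_sq {a b : ℕ} {δ : ℝ} (hδ : 0 ≤ δ)
    (hδ' : δ ≤ π / 2) (hab : a * b * δ ≤ 1) :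
    2 * (a + b).choose a / (3 * π ^ 2) * δ ^ 3 ≤
      ∫ θ in (0)..δ, cosSum a b θ * Real.sin θ ^ 2 := by
  have hcont := continuous_cosSum a b
  calc 2 * (a + b).choose a / (3 * π ^ 2) * δ ^ 3
      = ∫ θ in (0)..δ, (a + b).choose a / 2 * (2 / π * θ) ^ 2 := by
        simp only [mul_pow, intervalIntegral.integral_const_mul, integral_pow]
        norm_num
        ring
    _ ≤ _ := by
        refine intervalIntegral.integral_mono_on hδ
          (Continuous.intervalIntegrable (by fun_prop) _ _)
          (Continuous.intervalIntegrable (by fun_prop) _ _) fun θ ⟨hθ, hθδ⟩ => ?_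
        have hcos : (a + b).choose a / 2 ≤ cosSum a b θ := by
          refine choose_div_two_le_cosSum ?_
          rw [abs_of_nonneg (by positivity)]
          exact le_trans (by gcongr) hab
        have hcos0 : 0 ≤ cosSum a b θ := (by positivity : (0 : ℝ) ≤ _).trans hcos
        gcongr
        exact Real.mul_le_sin hθ (hθδ.trans hδ')

theorem four_pow_div_sub_le_gap {r c : ℕ} (hr : 4 ≤ r) (hc : r * r = 2 * (c + 1)) :
    4 ^ r / (12 * r ^ 7) - 2 * (7 / 2 : ℝ) ^ r ≤ gap r r (c + 1) := by
  have hr0 : (0 : ℝ) < r * r := by positivity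
  have hcont := continuous_cosSum r r
  have integrable (s t : ℝ) :
      IntervalIntegrable (fun θ => cosSum r r θ * Real.sin θ ^ 2) volume s t :=
    Continuous.intervalIntegrable (by fun_prop) s t
  have hδ : (0 : ℝ) < 1 / (r * r) := one_div_pos.2 hr0
  have hδ' : 1 / (r * r : ℝ) ≤ π / 2 := by
    refine le_trans ?_ Real.one_le_pi_div_two
    rw [div_le_one hr0]
    exact_mod_cast (by nlinarith : 1 ≤ r * r)
  have hsplit := intervalIntegral.integral_add_adjacent_intervals
    (integrable 0 (1 / (r * r))) (integrable (1 / (r * r)) (π / 2))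
  rw [integral_cosSum_mul_sin_sq hc] at hsplit
  have hnear := choose_mul_le_integral_cosSum_mul_sin_sq (a := r) (b := r) hδ.le hδ'
    (mul_one_div_cancel hr0.ne').le
  have hmain := four_pow_div_le_choose_mul hr
  have hfar := neg_pow_mul_le_integral_cosSum_mul_sin_sq (r := r) hδ hδ'
  have hloss : (7 / 2 : ℝ) ^ r * (π / 2 - 1 / (r * r)) ≤ (7 / 2) ^ r * (π / 2) := by
    gcongr
    linarith
  refine le_of_mul_le_mul_left ?_ (by positivity : 0 < π / 4)
  linarith

end CircleMethod

section LowerBound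

theorem exists_forall_pow_le_gap {x : ℝ} (hx0 : 0 ≤ x) (hx : x < 4) :
    ∃ R : ℕ, ∀ r c : ℕ, R ≤ r → r * r = 2 * (c + 1) → x ^ r ≤ gap r r (c + 1) := by
  set y := max x (7 / 2)
  have hy0 : 0 < y := lt_max_of_lt_right (by norm_num)
  have hy4 : y < 4 := max_lt hx (by norm_num)
  have hlim := tendsto_pow_const_div_const_pow_of_one_lt 7 ((one_lt_div hy0).2 hy4)
  obtain ⟨R, hR⟩ := Filter.eventually_atTop.1 
    (hlim.eventually_lt_const (by norm_num : (0 : ℝ) < 1 / 36))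
  refine ⟨max R 4, fun r c hr hc => ?_⟩
  have hr0 : 0 < (r : ℝ) := Nat.cast_pos.2 (by omega)
  have hsmall : 3 * y ^ r ≤ 4 ^ r / (12 * r ^ 7) := by
    have h := (hR r (le_of_max_le_left hr)).le
    rw [div_pow, div_div_eq_mul_div, div_le_div_iff₀ (by positivity) (by positivity)] at h
    rw [le_div_iff₀ (by positivity)]
    linarith
  calc x ^ r ≤ y ^ r := pow_le_pow_left₀ hx0 (le_max_left _ _) r
    _ = 3 * y ^ r - 2 * y ^ r := by ring
    _ ≤ 4 ^ r / (12 * r ^ 7) - 2 * (7 / 2) ^ r := by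
        gcongr
        exact le_max_right _ _
    _ ≤ gap r r (c + 1) := four_pow_div_sub_le_gap (le_of_max_le_right hr) hc

theorem exists_forall_rpow_sqrt_le_mul_gap {x : ℝ} (hx1 : 1 ≤ x) (hx : x < 4) :
    ∃ N : ℕ, ∀ a b k : ℕ, 8 ≤ a → 8 ≤ b → k ≠ 1 → 2 * k ≤ a * b →
      x ^ √(min (2 * k) (min a b ^ 2) : ℕ) ≤ x ^ N * gap a b k := by
  obtain ⟨R, hR⟩ := exists_forall_pow_le_gap (by linarith) hx
  refine ⟨2 * (R + 4) + 10, fun a b k ha hb hk1 hk => ?_⟩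
  set s := min (2 * k) (min a b ^ 2)
  set h := (s.sqrt - 8) / 2
  have hrpow : x ^ √(s : ℝ) ≤ x ^ (2 * h + 10) := by
    rw [← Real.rpow_natCast]
    refine Real.rpow_le_rpow_of_exponent_le hx1 (Real.real_sqrt_le_nat_sqrt_succ.trans ?_)
    exact_mod_cast (by omega : s.sqrt + 1 ≤ 2 * h + 10)
  rcases lt_or_ge h (R + 4) with hsmall | hlarge
  · have hgap : (1 : ℝ) ≤ gap a b k := mod_cast gap_pos ha hb hk1 hk
    calc x ^ √(s : ℝ) ≤ x ^ (2 * h + 10) := hrpow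
      _ ≤ x ^ (2 * (R + 4) + 10) := by gcongr
      _ ≤ x ^ (2 * (R + 4) + 10) * gap a b k := le_mul_of_one_le_right (by positivity) hgap
  · have hsqrt : s.sqrt ^ 2 ≤ s := Nat.sqrt_le' s
    have hle_min : s.sqrt ≤ min a b :=
      (Nat.pow_le_pow_iff_left two_ne_zero).1 (hsqrt.trans (min_le_right _ _))
    have hcenter : h * (2 * h) + 2 ≤ k := by
      have := hsqrt.trans (min_le_left _ _)
      have : 2 * h + 8 ≤ s.sqrt := by omega
      nlinarith
    have hgap : x ^ (2 * h) ≤ gap a b k := by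
      obtain ⟨c, hc⟩ : ∃ c, h * (2 * h) = c + 1 :=
        Nat.exists_eq_succ_of_ne_zero (Nat.mul_ne_zero (by omega) (by omega))
      calc x ^ (2 * h) ≤ gap (2 * h) (2 * h) (h * (2 * h)) :=
            hc ▸ hR (2 * h) c (by omega) (by rw [← hc]; ring)
        _ ≤ gap a b k :=
            mod_cast gap_center_le (by omega) (by omega) (by omega) hcenter hk
    calc x ^ √(s : ℝ) ≤ x ^ (2 * h + 10) := hrpow
      _ = x ^ 10 * x ^ (2 * h) := by ring
      _ ≤ x ^ (2 * (R + 4) + 10) * gap a b k := by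
        gcongr
        omega

theorem coe_gap_eq_sub {k : ℕ} (hk : k ≠ 0) (a b : ℕ) :
    (gap a b k : ℝ) = rectPartitions k a b - rectPartitions (k - 1) a b := by
  obtain ⟨k, rfl⟩ := Nat.exists_eq_succ_of_ne_zero hk
  simp [gap, rectPartitions_eq_coeff]

end LowerBound

end qBinomial

theorem kronecker_qbinomial_lower_bound_general {x : ℝ} (hx1 : 1 ≤ x) (hx : x < 4) :
    ∃ A : ℝ, 0 < A ∧
      ∀ ℓ m k : ℕ, 8 ≤ ℓ → 8 ≤ m → 2 ≤ k → 2 * k ≤ ℓ * m →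
        A * x ^ √(min (2 * k) (min ℓ m ^ 2) : ℕ) <
          (rectPartitions k ℓ m : ℝ) - rectPartitions (k - 1) ℓ m := by
  obtain ⟨N, hN⟩ := qBinomial.exists_forall_rpow_sqrt_le_mul_gap hx1 hx
  have hx0 : 0 < x := by linarith
  refine ⟨1 / (2 * x ^ N), by positivity, fun ℓ m k hℓ hm hk hkm => ?_⟩
  have hpos : 0 < (qBinomial.gap ℓ m k : ℝ) :=
    mod_cast qBinomial.gap_pos hℓ hm (by omega) hkm
  rw [← qBinomial.coe_gap_eq_sub (by omega), one_div_mul_eq_div, div_lt_iff₀ (by positivity)]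
  nlinarith [hN ℓ m k hℓ hm (by omega) hkm, pow_pos hx0 N, mul_pos (pow_pos hx0 N) hpos]

/-- There exists a universal constant `A > 0` such that for all `m ≥ ℓ ≥ 8` and all
`2 ≤ k ≤ ℓm/2`, one has `p_k(ℓ,m) − p_{k−1}(ℓ,m) > A · 2^{√s} / s^{9/4}` where
`s = min {2k, ℓ²}`. -/
theorem kronecker_qbinomial_lower_bound :
    ∃ A : ℝ, A > 0 ∧
      ∀ ℓ m k : ℕ, 8 ≤ ℓ → ℓ ≤ m → 2 ≤ k → 2 * k ≤ ℓ * m →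
        ((rectPartitions k ℓ m : ℝ) - (rectPartitions (k - 1) ℓ m : ℝ)) >
          A * (2 : ℝ) ^ Real.sqrt ((min (2 * k) (ℓ ^ 2) : ℕ) : ℝ) /
            ((min (2 * k) (ℓ ^ 2) : ℕ) : ℝ) ^ ((9 : ℝ) / 4) := by
  obtain ⟨A, hA, h⟩ := kronecker_qbinomial_lower_bound_general one_le_two (by norm_num)
  refine ⟨A, hA, fun ℓ m k hℓ hℓm hk hkm => ?_⟩
  have hs : 1 ≤ min (2 * k) (ℓ ^ 2) := le_min (by omega) (Nat.one_le_pow _ _ (by omega))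
  have hbound := h ℓ m k hℓ (hℓ.trans hℓm) hk hkm
  rw [min_eq_left hℓm] at hbound
  exact (div_le_self (by positivity)
    (Real.one_le_rpow (mod_cast hs) (by norm_num))).trans_lt hbound
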